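/- Dual norm formula: let φ be a divergence function satisfying the Δ₂-condition, ψ its convex conjugate, β > 0, and Z ∈ L^φ. Then the dual norm ‖Z‖*_{φ,β} := sup{E[X·Z] : X ∈ L^ψ, ‖X‖_{φ,β} ≤ 1} satisfies ‖Z‖*_{φ,β} = inf{λ ≥ E|Z| : E[φ(max{c_Z(λ), |Z|/λ})] ≤ β}, where c_Z : [E|Z|, ∞) → [0,1] is the (unique) continuous function with E[max{c_Z(λ), |Z|/λ}] = 1 for all λ ≥ E|Z|. Equivalently, ‖Z‖*_{φ,β} = inf{λ ≥ E|Z| : ∃ c ∈ [0,1] with E[max{c, |Z|/λ}] = 1 and E[φ(max{c, |Z|/λ})] ≤ β}. -/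

import Mathlib

open MeasureTheory
open scoped ENNReal

noncomputable section

/-- A divergence function: convex, lower semicontinuous `φ : ℝ → ℝ ∪ {∞}` with `φ 1 = 0`,
effective domain `[0, ∞)` and superlinear growth `φ x / x → ∞` as `x → ∞`. -/
structure IsDivergenceFunction (φ : ℝ → EReal) : Prop where
  convex : ∀ x y a b : ℝ, 0 < a → 0 < b → a + b = 1 →
    φ (a * x + b * y) ≤ (a : EReal) * φ x + (b : EReal) * φ y
  lsc : LowerSemicontinuous φ
  ne_bot : ∀ x : ℝ, φ x ≠ ⊥
  one : φ 1 = 0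
  domain : ∀ x : ℝ, φ x ≠ ⊤ ↔ 0 ≤ x
  superlinear : ∀ M : ℝ, ∃ N : ℝ, ∀ x : ℝ, N ≤ x → ((M * x : ℝ) : EReal) ≤ φ x

/-- The convex conjugate `ψ(y) = sup_z (y·z − φ(z))`, as an extended real number. -/
def psiE (φ : ℝ → EReal) (y : ℝ) : EReal := ⨆ z : ℝ, (((y * z : ℝ) : EReal) - φ z)

/-- The convex conjugate, as a real number (it is finite for divergence functions). -/
def psiR (φ : ℝ → EReal) (y : ℝ) : ℝ := (psiE φ y).toReal

open Classical in
/-- The objective `t (β + μ + E ψ(X/t − μ))` of the φ-divergence risk measure;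
the value is `⊤` when `ψ(X/t − μ)` fails to be integrable. -/
def rhoObj {Ω : Type*} [MeasurableSpace Ω] (φ : ℝ → EReal) (β : ℝ) (P : Measure Ω)
    (X : Ω → ℝ) (μ t : ℝ) : EReal :=
  if Integrable (fun ω => psiR φ (X ω / t - μ)) P then
    (((t * (β + μ + ∫ ω, psiR φ (X ω / t - μ) ∂P)) : ℝ) : EReal)
  else ⊤

/-- The φ-divergence risk measure `ρ_{φ,β}(X) = inf_{μ ∈ ℝ, t > 0} t (β + μ + E ψ(X/t − μ))`. -/
def rhoDiv {Ω : Type*} [MeasurableSpace Ω] (φ : ℝ → EReal) (β : ℝ) (P : Measure Ω)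
    (X : Ω → ℝ) : EReal :=
  ⨅ (μ : ℝ) (t : ℝ) (_ : 0 < t), rhoObj φ β P X μ t

/-- The Δ₂-condition: `φ(2x) ≤ k·φ(x)` for all `x > T`, for some `T, k ≥ 0`. -/
def DeltaTwo (φ : ℝ → EReal) : Prop :=
  ∃ T k : ℝ, 0 ≤ T ∧ 0 ≤ k ∧ ∀ x : ℝ, T < x → φ (2 * x) ≤ (k : EReal) * φ x
/-- The set of values `E[X·Z]` over the unit ball of the φ-divergence norm in `L^ψ`;
its supremum is the dual norm `‖Z‖*_{φ,β}`. -/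
def dualNormSet {Ω : Type*} [MeasurableSpace Ω] (φ : ℝ → EReal) (β : ℝ) (P : Measure Ω)
    (Z : Ω → ℝ) : Set EReal :=
  {v | ∃ X : Ω → ℝ, (∃ t : ℝ, 0 < t ∧ Integrable (fun ω => psiR φ (t * |X ω|)) P) ∧
    rhoDiv φ β P (fun ω => |X ω|) ≤ (1 : EReal) ∧
    Integrable (fun ω => X ω * Z ω) P ∧ v = ((∫ ω, X ω * Z ω ∂P : ℝ) : EReal)}
theorem phi_coe {φ : ℝ → EReal} (hφ : IsDivergenceFunction φ) {x : ℝ} (hx : 0 ≤ x) :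
    φ x = (((φ x).toReal : ℝ) : EReal) :=
  (EReal.coe_toReal ((hφ.domain x).2 hx) (hφ.ne_bot x)).symm

theorem phi_convexOn {φ : ℝ → EReal} (hφ : IsDivergenceFunction φ) :
    ConvexOn ℝ (Set.Ici 0) (fun x => (φ x).toReal) := by
  refine convexOn_iff_forall_pos.2 ⟨convex_Ici 0, ?_⟩
  intro x hx y hy a b ha hb hab
  have hx' : (0:ℝ) ≤ x := hx
  have hy' : (0:ℝ) ≤ y := hy
  have h := hφ.convex x y a b ha hb hab
  rw [phi_coe hφ hx', phi_coe hφ hy', phi_coe hφ (x := a * x + b * y) (by positivity)] at h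
  simp only [smul_eq_mul]
  exact_mod_cast h

theorem phi_one {φ : ℝ → EReal} (hφ : IsDivergenceFunction φ) : (φ 1).toReal = 0 := by
  simp [hφ.one]

theorem phi_subgrad {φ : ℝ → EReal} (hφ : IsDivergenceFunction φ) :
    ∃ g : ℝ → ℝ, ∀ x, 0 < x → ∀ y, 0 ≤ y → (φ x).toReal + g x * (y - x) ≤ (φ y).toReal := by
  have hc := phi_convexOn hφ
  set Φ : ℝ → ℝ := fun x => (φ x).toReal with hΦ
  refine ⟨fun x => derivWithin Φ (Set.Ioi x) x, fun x hx y hy => ?_⟩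
  change Φ x + _ ≤ Φ y
  have hi : x ∈ interior (Set.Ici (0:ℝ)) := by simpa using hx
  rcases lt_trichotomy x y with h | h | h
  · have := hc.rightDeriv_le_slope_of_mem_interior hi hy h
    rw [slope_def_field, le_div_iff₀ (by linarith)] at this
    dsimp only
    linarith
  · subst h; simp
  · have h1 := hc.slope_le_leftDeriv_of_mem_interior (x := y) (y := x) hy hi h
    have h2 := hc.leftDeriv_le_rightDeriv_of_mem_interior hi
    have h3 := h1.trans h2
    rw [slope_def_field, div_le_iff₀ (by linarith)] at h3
    dsimp only
    linarith

theorem phi_bddBelow {φ : ℝ → EReal} (hφ : IsDivergenceFunction φ) (y : ℝ) :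
    ∃ m : ℝ, 0 ≤ m ∧ ∀ z, 0 ≤ z → y * z - (φ z).toReal ≤ m := by
  obtain ⟨g, hg⟩ := phi_subgrad hφ
  obtain ⟨N, hN⟩ := hφ.superlinear y
  refine ⟨|y| * |N| + |g 1| * (|N| + 1), by positivity, fun z hz => ?_⟩
  have hp : 0 ≤ |y| * |N| + |g 1| * (|N| + 1) := by positivity
  by_cases h : N ≤ z
  · have := hN z h
    rw [phi_coe hφ hz] at this
    have : y * z ≤ (φ z).toReal := by exact_mod_cast this
    linarith
  · push Not at h
    have h1 := hg 1 one_pos z hz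
    rw [phi_one hφ] at h1
    have hzN : z ≤ |N| := h.le.trans (le_abs_self _)
    have h2 : y * z ≤ |y| * |N| := 
      (mul_le_mul_of_nonneg_right (le_abs_self y) hz).trans
        (mul_le_mul_of_nonneg_left hzN (abs_nonneg _))
    have h3 : -(g 1 * (z - 1)) ≤ |g 1| * (|N| + 1) := by
      refine (neg_le_abs _).trans ?_
      rw [abs_mul]
      refine mul_le_mul_of_nonneg_left ?_ (abs_nonneg _)
      rw [abs_le]; constructor <;> linarith [abs_nonneg N]
    linarith

theorem psiE_le {φ : ℝ → EReal} (hφ : IsDivergenceFunction φ) {y B : ℝ}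
    (h : ∀ z, 0 ≤ z → y * z - (φ z).toReal ≤ B) : psiE φ y ≤ (B : EReal) := by
  refine iSup_le fun z => ?_
  by_cases hz : 0 ≤ z
  · rw [phi_coe hφ hz]
    exact_mod_cast h z hz
  · have : φ z = ⊤ := by
      by_contra h'
      exact hz ((hφ.domain z).1 h')
    rw [this]; simp

theorem psiE_ge {φ : ℝ → EReal} (hφ : IsDivergenceFunction φ) {y z : ℝ} (hz : 0 ≤ z) :
    ((y * z - (φ z).toReal : ℝ) : EReal) ≤ psiE φ y := by
  refine le_trans ?_ (le_iSup _ z)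
  conv_rhs => rw [phi_coe hφ hz]
  exact_mod_cast le_rfl

theorem psi_coe {φ : ℝ → EReal} (hφ : IsDivergenceFunction φ) (y : ℝ) :
    ((psiR φ y : ℝ) : EReal) = psiE φ y := by
  obtain ⟨m, -, hm⟩ := phi_bddBelow hφ y
  refine EReal.coe_toReal ?_ ?_
  · exact ne_of_lt (lt_of_le_of_lt (psiE_le hφ hm) (EReal.coe_lt_top _))
  · exact ne_of_gt (lt_of_lt_of_le (EReal.bot_lt_coe _) (psiE_ge hφ zero_le_one))

theorem psi_le {φ : ℝ → EReal} (hφ : IsDivergenceFunction φ) {y B : ℝ}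
    (h : ∀ z, 0 ≤ z → y * z - (φ z).toReal ≤ B) : psiR φ y ≤ B := by
  have := psiE_le hφ h
  rw [← psi_coe hφ] at this
  exact_mod_cast this

theorem psi_ge {φ : ℝ → EReal} (hφ : IsDivergenceFunction φ) (y : ℝ) {z : ℝ} (hz : 0 ≤ z) :
    y * z - (φ z).toReal ≤ psiR φ y := by
  have := psiE_ge hφ (y := y) hz
  rw [← psi_coe hφ] at this
  exact_mod_cast this

theorem psi_mono {φ : ℝ → EReal} (hφ : IsDivergenceFunction φ) : Monotone (psiR φ) := by
  intro a b hab
  refine psi_le hφ fun z hz => ?_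
  have := psi_ge hφ b hz
  nlinarith

theorem psi_mid {φ : ℝ → EReal} (hφ : IsDivergenceFunction φ) (a b : ℝ) :
    psiR φ (1 / 2 * (a + b)) ≤ 1 / 2 * (psiR φ a + psiR φ b) := by
  refine psi_le hφ fun z hz => ?_
  have := psi_ge hφ b hz
  have := psi_ge hφ a hz
  nlinarith

theorem psi_ge_self {φ : ℝ → EReal} (hφ : IsDivergenceFunction φ) (y : ℝ) : y ≤ psiR φ y := by
  have := psi_ge hφ y zero_le_one
  rw [phi_one hφ] at this
  linarith

/-- convex upper bound on a segment -/
theorem phi_le_max {φ : ℝ → EReal} (hφ : IsDivergenceFunction φ) {x y : ℝ} (hx : 0 ≤ x)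
    (hxy : x ≤ y) : (φ x).toReal ≤ |(φ 0).toReal| + |(φ y).toReal| := by
  have := (phi_convexOn hφ).le_max_of_mem_Icc (x := 0) (y := y) (z := x)
    (by simp) (by simpa using hx.trans hxy) ⟨hx, hxy⟩
  refine this.trans (max_le ?_ ?_)
  · have := le_abs_self (φ 0).toReal
    have := abs_nonneg (φ y).toReal
    linarith
  · have := abs_nonneg (φ 0).toReal
    have := le_abs_self (φ y).toReal
    linarith

theorem phi_double {φ : ℝ → EReal} (hφ : IsDivergenceFunction φ) (hΔ : DeltaTwo φ) :
    ∃ C : ℝ, 1 ≤ C ∧ ∀ x, 0 ≤ x → |(φ (2 * x)).toReal| ≤ C * (1 + |(φ x).toReal|) := by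
  obtain ⟨T, k, hT, hk, h⟩ := hΔ
  obtain ⟨m, hm, hm'⟩ := phi_bddBelow hφ 0
  have p0 := abs_nonneg (φ 0).toReal
  have p1 := abs_nonneg (φ (2 * T)).toReal
  refine ⟨1 + m + k + |(φ 0).toReal| + |(φ (2 * T)).toReal|, by linarith, fun x hx => ?_⟩
  have px := abs_nonneg (φ x).toReal
  have h2 := hm' (2 * x) (by linarith)
  have key : (φ (2 * x)).toReal ≤ |(φ 0).toReal| + |(φ (2 * T)).toReal| + k * |(φ x).toReal| := by
    by_cases hxT : T < x
    · have := h x hxT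
      rw [phi_coe hφ hx, phi_coe hφ (x := 2 * x) (by linarith)] at this
      have h3 : (φ (2 * x)).toReal ≤ k * (φ x).toReal := by exact_mod_cast this
      have := mul_le_mul_of_nonneg_left (le_abs_self (φ x).toReal) hk
      linarith
    · push Not at hxT
      have := phi_le_max hφ (x := 2 * x) (y := 2 * T) (by linarith) (by linarith)
      have : 0 ≤ k * |(φ x).toReal| := by positivity
      linarith
  rw [abs_le]
  constructor <;> nlinarith [mul_nonneg hm px, mul_nonneg hk px, mul_nonneg p0 px, mul_nonneg p1 px]

theorem phi_pow {φ : ℝ → EReal} (hφ : IsDivergenceFunction φ) (hΔ : DeltaTwo φ) (n : ℕ) :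
    ∃ C : ℝ, 1 ≤ C ∧ ∀ x, 0 ≤ x → |(φ (2 ^ n * x)).toReal| ≤ C * (1 + |(φ x).toReal|) := by
  obtain ⟨C, hC, h⟩ := phi_double hφ hΔ
  induction n with
  | zero => exact ⟨1, le_rfl, fun x hx => by simp⟩
  | succ n ih =>
    obtain ⟨D, hD, h'⟩ := ih
    refine ⟨C * (1 + D), by nlinarith, fun x hx => ?_⟩
    have h1 := h (2 ^ n * x) (by positivity)
    have h2 := h' x hx
    have e : (2:ℝ) ^ (n + 1) * x = 2 * (2 ^ n * x) := by ring
    rw [e]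
    refine h1.trans ?_
    rw [mul_assoc]
    refine mul_le_mul_of_nonneg_left ?_ (by linarith)
    nlinarith [abs_nonneg (φ x).toReal]

theorem phi_meas {φ : ℝ → EReal} (hφ : IsDivergenceFunction φ) :
    Measurable (fun x => (φ x).toReal) :=
  hφ.lsc.measurable.ereal_toReal

theorem integrable_sandwich {Ω : Type*} [MeasurableSpace Ω] {P : Measure Ω} {f a b : Ω → ℝ}
    (hf : AEStronglyMeasurable f P) (ha : Integrable a P) (hb : Integrable b P)
    (h1 : ∀ ω, a ω ≤ f ω) (h2 : ∀ ω, f ω ≤ b ω) : Integrable f P := by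
  refine Integrable.mono' (ha.abs.add hb.abs) hf (Filter.Eventually.of_forall fun ω => ?_)
  simp only [Pi.add_apply, Real.norm_eq_abs]
  rw [abs_le]
  have := h1 ω
  have := h2 ω
  constructor <;>
    linarith [neg_abs_le (a ω), le_abs_self (b ω), abs_nonneg (a ω), abs_nonneg (b ω)]

theorem phi_integrable {Ω : Type*} [MeasurableSpace Ω] {P : Measure Ω} [IsProbabilityMeasure P]
    {φ : ℝ → EReal} (hφ : IsDivergenceFunction φ) (hΔ : DeltaTwo φ) {Z : Ω → ℝ}
    (hZφ : ∃ t : ℝ, 0 < t ∧ Integrable (fun ω => (φ (t * |Z ω|)).toReal) P)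
    {f : Ω → ℝ} (hf : AEMeasurable f P) (a s : ℝ)
    (h0 : ∀ ω, 0 ≤ f ω) (h1 : ∀ ω, f ω ≤ max a (s * |Z ω|)) :
    Integrable (fun ω => (φ (f ω)).toReal) P := by
  obtain ⟨t, ht, hi⟩ := hZφ
  obtain ⟨m, hm, hm'⟩ := phi_bddBelow hφ 0
  obtain ⟨n, hn⟩ := pow_unbounded_of_one_lt (s / t) (one_lt_two (α := ℝ))
  obtain ⟨C, hC, hC'⟩ := phi_pow hφ hΔ n
  have hs : s ≤ 2 ^ n * t := by
    rw [div_lt_iff₀ ht] at hn; exact hn.le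
  refine integrable_sandwich (a := fun _ => -m)
    (b := fun ω => |(φ 0).toReal| + |(φ a).toReal| + C * (1 + |(φ (t * |Z ω|)).toReal|))
    ((phi_meas hφ).comp_aemeasurable hf).aestronglyMeasurable (integrable_const _) ?_ ?_ ?_
  · exact (integrable_const _).add (((integrable_const _).add hi.abs).const_mul C)
  · intro ω
    have := hm' (f ω) (h0 ω)
    linarith
  · intro ω
    have hz := abs_nonneg (Z ω)
    have p1 := abs_nonneg (φ a).toReal
    have p2 := abs_nonneg (φ (t * |Z ω|)).toReal
    have p3 : 0 ≤ C * (1 + |(φ (t * |Z ω|)).toReal|) := by positivity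
    rcases le_max_iff.1 (h1 ω) with h | h
    · have := phi_le_max hφ (h0 ω) h
      linarith
    · have h3 : f ω ≤ 2 ^ n * (t * |Z ω|) := by
        refine h.trans ?_
        rw [← mul_assoc]
        exact mul_le_mul_of_nonneg_right hs hz
      have := phi_le_max hφ (h0 ω) h3
      have := hC' (t * |Z ω|) (by positivity)
      linarith

theorem rhoDiv_le {Ω : Type*} [MeasurableSpace Ω] {P : Measure Ω} {φ : ℝ → EReal} {β : ℝ}
    {X : Ω → ℝ} (μ t : ℝ) (ht : 0 < t) (hi : Integrable (fun ω => psiR φ (X ω / t - μ)) P) :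
    rhoDiv φ β P X ≤ ((t * (β + μ + ∫ ω, psiR φ (X ω / t - μ) ∂P) : ℝ) : EReal) := by
  refine iInf_le_of_le μ (iInf_le_of_le t (iInf_le_of_le ht ?_))
  rw [rhoObj, if_pos hi]

theorem exists_sign {Ω : Type*} (Z : Ω → ℝ) :
    ∃ s : Ω → ℝ, (∀ ω, |s ω| = 1) ∧ ∀ ω, s ω * Z ω = |Z ω| := by
  classical
  refine ⟨fun ω => if 0 ≤ Z ω then 1 else -1, fun ω => ?_, fun ω => ?_⟩
  · dsimp only; split_ifs <;> simp
  · dsimp only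
    split_ifs with h
    · rw [abs_of_nonneg h]; ring
    · rw [abs_of_neg (not_le.1 h)]; ring

theorem lower_one {Ω : Type*} [MeasurableSpace Ω] {P : Measure Ω} [IsProbabilityMeasure P]
    {φ : ℝ → EReal} (hφ : IsDivergenceFunction φ) {β : ℝ} (hβ : 0 < β)
    {Z : Ω → ℝ} (hZ : Integrable Z P) :
    ((∫ ω, |Z ω| ∂P : ℝ) : EReal) ≤ sSup (dualNormSet φ β P Z) := by
  obtain ⟨s, hs, hsZ⟩ := exists_sign Z
  refine le_sSup ⟨s, ⟨1, one_pos, ?_⟩, ?_, ?_, ?_⟩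
  · simp only [hs]; exact integrable_const _
  · simp only [hs]
    by_contra hlt
    push Not at hlt
    obtain ⟨r, hr1, hr2⟩ := EReal.lt_iff_exists_real_btwn.1 hlt
    have hr1' : 1 < r := by exact_mod_cast hr1
    have hp := psi_ge_self hφ 0
    have hK : 0 < β + psiR φ 0 := by linarith
    have ht : 0 < (r - 1) / (β + psiR φ 0) := div_pos (by linarith) hK
    have := rhoDiv_le (P := P) (φ := φ) (β := β) (X := fun _ => (1:ℝ))
      (1 / ((r - 1) / (β + psiR φ 0))) ((r - 1) / (β + psiR φ 0)) ht (integrable_const _)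
    refine absurd (hr2.trans_le this) (not_lt.2 ?_)
    have e : (r - 1) / (β + psiR φ 0) * (β + (1 / ((r - 1) / (β + psiR φ 0))) + psiR φ 0) = r := by
      have : r - 1 ≠ 0 := by linarith
      field_simp
      ring
    simp only [sub_self, integral_const, probReal_univ, smul_eq_mul, one_mul]
    rw [e]
  · simp only [hsZ]; exact hZ.abs
  · simp only [hsZ]

theorem upper_one {Ω : Type*} [MeasurableSpace Ω] {P : Measure Ω} [IsProbabilityMeasure P]
    {φ : ℝ → EReal} (hφ : IsDivergenceFunction φ) {β : ℝ}
    {Z : Ω → ℝ} (hZ : Integrable Z P) {lam cc : ℝ} (hlam : (∫ ω, |Z ω| ∂P) ≤ lam)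
    (hcc : 0 ≤ cc) (h1 : (∫ ω, max cc (|Z ω| / lam) ∂P) = 1)
    (hi : Integrable (fun ω => (φ (max cc (|Z ω| / lam))).toReal) P)
    (hb : (∫ ω, (φ (max cc (|Z ω| / lam))).toReal ∂P) ≤ β)
    {X : Ω → ℝ} (hX : rhoDiv φ β P (fun ω => |X ω|) ≤ (1 : EReal))
    (hXZ : Integrable (fun ω => X ω * Z ω) P) : (∫ ω, X ω * Z ω ∂P) ≤ lam := by
  have hZ0 : 0 ≤ ∫ ω, |Z ω| ∂P := integral_nonneg fun ω => abs_nonneg _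
  rcases (hZ0.trans hlam).eq_or_lt with h0 | hpos
  · have hz : ∫ ω, |Z ω| ∂P = 0 := by linarith
    rw [integral_eq_zero_iff_of_nonneg (fun ω => abs_nonneg _) hZ.abs] at hz
    have : ∫ ω, X ω * Z ω ∂P = 0 := by
      refine integral_eq_zero_of_ae ?_
      filter_upwards [hz] with ω hω
      have : Z ω = 0 := by simpa using hω
      simp [this]
    linarith
  by_contra hlt
  push Not at hlt
  set r := ∫ ω, X ω * Z ω ∂P with hr
  have hr1 : 1 < r / lam := by rwa [one_lt_div hpos]
  have hX' : rhoDiv φ β P (fun ω => |X ω|) < ((r / lam : ℝ) : EReal) :=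
    lt_of_le_of_lt hX (by exact_mod_cast hr1)
  simp only [rhoDiv, iInf_lt_iff] at hX'
  obtain ⟨μ, t, ht, hobj⟩ := hX'
  unfold rhoObj at hobj
  split_ifs at hobj with hint
  · have hobj' : t * (β + μ + ∫ ω, psiR φ (|X ω| / t - μ) ∂P) < r / lam := by exact_mod_cast hobj
    have hW : Integrable (fun ω => max cc (|Z ω| / lam)) P :=
      (integrable_const cc).sup (hZ.abs.div_const lam)
    have hint1 : Integrable (fun ω => psiR φ (|X ω| / t - μ)) P := hint
    have hint2 : Integrable (fun ω => psiR φ (|X ω| / t - μ) +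
        (φ (max cc (|Z ω| / lam))).toReal) P := hint1.add hi
    have hmono : r / lam ≤ ∫ ω, t * (psiR φ (|X ω| / t - μ) + (φ (max cc (|Z ω| / lam))).toReal
        + μ * max cc (|Z ω| / lam)) ∂P := by
      rw [hr, ← integral_div]
      refine integral_mono (hXZ.div_const lam)
        (((hint.add hi).add (hW.const_mul μ)).const_mul t) fun ω => ?_
      dsimp only
      have hWn : 0 ≤ max cc (|Z ω| / lam) := hcc.trans (le_max_left _ _)
      have hf := psi_ge hφ (|X ω| / t - μ) hWn
      have h2 : |Z ω| / lam ≤ max cc (|Z ω| / lam) := le_max_right _ _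
      generalize max cc (|Z ω| / lam) = W at *
      have h3 : X ω * Z ω / lam ≤ |X ω| * W := by
        calc X ω * Z ω / lam ≤ |X ω * Z ω| / lam := by gcongr; exact le_abs_self _
          _ = |X ω| * (|Z ω| / lam) := by rw [abs_mul]; ring
          _ ≤ |X ω| * W := by gcongr
      have h4 : t * ((|X ω| / t - μ) * W + μ * W) = |X ω| * W := by field_simp; ring
      rw [← h4] at h3
      refine h3.trans (mul_le_mul_of_nonneg_left ?_ ht.le)
      linarith
    rw [integral_const_mul, integral_add hint2 (hW.const_mul μ), integral_add hint1 hi,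
      integral_const_mul, h1] at hmono
    have := mul_le_mul_of_nonneg_left hb ht.le
    linarith
  · exact absurd hobj not_top_lt

theorem max_ae_eq {Ω : Type*} [MeasurableSpace Ω] {P : Measure Ω} [IsProbabilityMeasure P]
    {Y : Ω → ℝ} (hY : Integrable Y P) {a b : ℝ} (hab : a ≤ b)
    (h : ∫ ω, max a (Y ω) ∂P = ∫ ω, max b (Y ω) ∂P) :
    (fun ω => max a (Y ω)) =ᵐ[P] fun ω => max b (Y ω) := 
  (integral_eq_iff_of_ae_le ((integrable_const a).sup hY) ((integrable_const b).sup hY)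
    (Filter.Eventually.of_forall fun ω => max_le_max_right _ hab)).1 h

theorem max_ae_eq_one {Ω : Type*} [MeasurableSpace Ω] {P : Measure Ω} [IsProbabilityMeasure P]
    {Y : Ω → ℝ} (hY : Integrable Y P) {a b : ℝ}
    (h : ∫ ω, max a (Y ω) ∂P = ∫ ω, max b (Y ω) ∂P) :
    (fun ω => max a (Y ω)) =ᵐ[P] fun ω => max b (Y ω) := by
  rcases le_total a b with hab | hab
  · exact max_ae_eq hY hab h
  · exact (max_ae_eq hY hab h.symm).symm

theorem exists_lam {Ω : Type*} [MeasurableSpace Ω] {P : Measure Ω} [IsProbabilityMeasure P]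
    {φ : ℝ → EReal} (hφ : IsDivergenceFunction φ) (hΔ : DeltaTwo φ) {β : ℝ} (hβ : 0 < β)
    {Z : Ω → ℝ} (hZ : Integrable Z P)
    (hZφ : ∃ t : ℝ, 0 < t ∧ Integrable (fun ω => (φ (t * |Z ω|)).toReal) P) :
    ∃ lam : ℝ, (∫ ω, |Z ω| ∂P) ≤ lam ∧ ∀ cc ∈ Set.Icc (0:ℝ) 1,
      (∫ ω, max cc (|Z ω| / lam) ∂P) = 1 →
      Integrable (fun ω => (φ (max cc (|Z ω| / lam))).toReal) P ∧
        (∫ ω, (φ (max cc (|Z ω| / lam))).toReal ∂P) ≤ β := by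
  obtain ⟨t, ht, hti⟩ := id hZφ
  have hZ0 : 0 ≤ ∫ ω, |Z ω| ∂P := integral_nonneg fun ω => abs_nonneg _
  set m := ∫ ω, |Z ω| ∂P with hm
  set A := ∫ ω, |(φ (t * |Z ω|)).toReal| ∂P with hA
  have hA0 : 0 ≤ A := integral_nonneg fun ω => abs_nonneg _
  set B := |(φ 0).toReal| with hB
  have hB0 : 0 ≤ B := abs_nonneg _
  set K : ℝ := 1 + t * m + (A + B * (t * m)) / β with hK
  have htm : 0 ≤ t * m := by positivity
  have hq : 0 ≤ (A + B * (t * m)) / β := by positivity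
  have hK1 : 1 ≤ K := by linarith
  have hK0 : 0 < K := by linarith
  refine ⟨K / t, ?_, ?_⟩
  · rw [le_div_iff₀ ht]; linarith
  intro cc hcc h1
  have hlam : 0 < K / t := by positivity
  have hYm : Integrable (fun ω => |Z ω| / (K / t)) P := hZ.abs.div_const _
  have hWi : Integrable (fun ω => max cc (|Z ω| / (K / t))) P := (integrable_const cc).sup hYm
  have hi : Integrable (fun ω => (φ (max cc (|Z ω| / (K / t)))).toReal) P := by
    refine phi_integrable hφ hΔ hZφ hWi.aemeasurable cc (1 / (K / t))
      (fun ω => hcc.1.trans (le_max_left _ _)) fun ω => ?_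
    rw [one_div, inv_mul_eq_div]
  refine ⟨hi, ?_⟩
  have hc1 : 1 - cc ≤ t * m / K := by
    have : (1:ℝ) ≤ ∫ ω, (cc + |Z ω| / (K / t)) ∂P := by
      rw [← h1]
      refine integral_mono hWi ((integrable_const cc).add hYm) fun ω => ?_
      have : 0 ≤ |Z ω| / (K / t) := by positivity
      exact max_le (by dsimp only; linarith) (by dsimp only; linarith [hcc.1])
    rw [integral_add (integrable_const cc) hYm, integral_div] at this
    simp only [integral_const, probReal_univ, smul_eq_mul, one_mul, ← hm] at this
    have e : m / (K / t) = t * m / K := by field_simp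
    linarith
  have hpt : ∀ ω, (φ (max cc (|Z ω| / (K / t)))).toReal ≤
      |(φ (t * |Z ω|)).toReal| / K + B * (t * m / K) := by
    intro ω
    have hW0 : cc ≤ max cc (|Z ω| / (K / t)) := le_max_left _ _
    have hV0 : 0 ≤ t * |Z ω| := by positivity
    have hor : max cc (|Z ω| / (K / t)) ≤ 1 ∨
        (1 < max cc (|Z ω| / (K / t)) ∧ max cc (|Z ω| / (K / t)) = t * |Z ω| / K) := by
      by_cases h : max cc (|Z ω| / (K / t)) ≤ 1
      · exact Or.inl h
      · right
        push Not at h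
        refine ⟨h, ?_⟩
        rcases lt_max_iff.1 h with h' | h'
        · linarith [hcc.2]
        · rw [max_eq_right (by linarith [hcc.2])]; field_simp
    generalize max cc (|Z ω| / (K / t)) = W at *
    have pA : 0 ≤ |(φ (t * |Z ω|)).toReal| / K := by positivity
    have pB : 0 ≤ B * (t * m / K) := by positivity
    have hcv := (phi_convexOn hφ).2
    have hone := phi_one hφ
    rcases hor with h | ⟨h, h'⟩
    · have := hcv (x := 0) (by simp) (y := 1) (by simp) (a := 1 - W) (b := W)
        (by linarith) (by linarith [hcc.1]) (by ring)
      simp only [smul_eq_mul, mul_zero, mul_one, zero_add, hone, add_zero] at this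
      have h3 : (1 - W) * (φ 0).toReal ≤ (1 - W) * B :=
        mul_le_mul_of_nonneg_left (le_abs_self _) (by linarith)
      have h4 : (1 - W) * B ≤ (t * m / K) * B := mul_le_mul_of_nonneg_right (by linarith) hB0
      linarith
    · generalize t * |Z ω| = V at *
      have hVW : V = K * W := by rw [h']; field_simp
      have hV1 : 1 < V := by nlinarith
      have hθ : (W - 1) / (V - 1) ≤ 1 / K := by
        rw [div_le_div_iff₀ (by linarith) hK0]; nlinarith
      have hθ0 : 0 ≤ (W - 1) / (V - 1) := div_nonneg (by linarith) (by linarith)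
      have hθ1 : (W - 1) / (V - 1) ≤ 1 := hθ.trans (by rw [div_le_one hK0]; exact hK1)
      have := hcv (x := 1) (by simp) (y := V) (by simpa using hV0)
        (a := 1 - (W - 1) / (V - 1)) (b := (W - 1) / (V - 1))
        (by linarith) hθ0 (by ring)
      have e : (1 - (W - 1) / (V - 1)) * 1 + (W - 1) / (V - 1) * V = W := by
        have : V - 1 ≠ 0 := by linarith
        field_simp; ring
      simp only [smul_eq_mul, e, hone, mul_zero, zero_add] at this
      have h3 : (W - 1) / (V - 1) * (φ V).toReal ≤ (W - 1) / (V - 1) * |(φ V).toReal| :=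
        mul_le_mul_of_nonneg_left (le_abs_self _) hθ0
      have h4 : (W - 1) / (V - 1) * |(φ V).toReal| ≤ 1 / K * |(φ V).toReal| :=
        mul_le_mul_of_nonneg_right hθ (abs_nonneg _)
      have h5 : 1 / K * |(φ V).toReal| = |(φ V).toReal| / K := by ring
      linarith
  have hfin : ∫ ω, (φ (max cc (|Z ω| / (K / t)))).toReal ∂P ≤
      ∫ ω, (|(φ (t * |Z ω|)).toReal| / K + B * (t * m / K)) ∂P :=
    integral_mono hi ((hti.abs.div_const K).add (integrable_const (B * (t * m / K))))
      (fun ω => hpt ω)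
  have e2 : ∫ ω, (|(φ (t * |Z ω|)).toReal| / K + B * (t * m / K)) ∂P
      = A / K + B * (t * m / K) := by
    rw [integral_add (hti.abs.div_const K) (integrable_const _), integral_div]
    simp [hA]
  rw [e2] at hfin
  refine hfin.trans ?_
  have e3 : A / K + B * (t * m / K) = (A + B * (t * m)) / K := by ring
  rw [e3, div_le_iff₀ hK0]
  have e4 : β * ((A + B * (t * m)) / β) = A + B * (t * m) := by field_simp
  rw [hK]
  nlinarith

theorem lower_two {Ω : Type*} [MeasurableSpace Ω] {P : Measure Ω} [IsProbabilityMeasure P]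
    {φ : ℝ → EReal} (hφ : IsDivergenceFunction φ) (hΔ : DeltaTwo φ) {β : ℝ} (hβ : 0 < β)
    {Z : Ω → ℝ} (hZ : Integrable Z P)
    (hZφ : ∃ t : ℝ, 0 < t ∧ Integrable (fun ω => (φ (t * |Z ω|)).toReal) P)
    {lam c : ℝ} (hlam : (∫ ω, |Z ω| ∂P) < lam) (hc : 0 ≤ c)
    (h1 : (∫ ω, max c (|Z ω| / lam) ∂P) = 1)
    (hb : Integrable (fun ω => (φ (max c (|Z ω| / lam))).toReal) P →
      β < (∫ ω, (φ (max c (|Z ω| / lam))).toReal ∂P)) :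
    (lam : EReal) ≤ sSup (dualNormSet φ β P Z) := by
  obtain ⟨g, hg⟩ := phi_subgrad hφ
  obtain ⟨s, hs, hsZ⟩ := exists_sign Z
  have hZ0 : 0 ≤ ∫ ω, |Z ω| ∂P := integral_nonneg fun ω => abs_nonneg _
  have hlam0 : 0 < lam := hZ0.trans_lt hlam
  -- positivity of c
  have hc0 : 0 < c := by
    rcases hc.eq_or_lt with h | h
    · exfalso
      rw [← h] at h1
      have e : ∀ ω, max 0 (|Z ω| / lam) = |Z ω| / lam := fun ω =>
        max_eq_right (by positivity)
      simp only [e] at h1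
      rw [integral_div, div_eq_one_iff_eq hlam0.ne'] at h1
      linarith
    · exact h
  have hgmono : ∀ x y, 0 < x → x ≤ y → g x ≤ g y := by
    intro x y hx hxy
    rcases hxy.eq_or_lt with h | h
    · rw [h]
    have a1 := hg x hx y (by linarith)
    have a2 := hg y (by linarith) x hx.le
    nlinarith
  set W : Ω → ℝ := fun ω => max c (|Z ω| / lam) with hWdef
  have hWc : ∀ ω, c ≤ W ω := fun ω => le_max_left _ _
  have hW0 : ∀ ω, 0 < W ω := fun ω => hc0.trans_le (hWc ω)
  have hWi : Integrable W P := (integrable_const c).sup (hZ.abs.div_const lam)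
  have hWle : ∀ ω, W ω ≤ max c (1 / lam * |Z ω|) := fun ω => by
    rw [one_div, inv_mul_eq_div]
  have hφW : Integrable (fun ω => (φ (W ω)).toReal) P :=
    phi_integrable hφ hΔ hZφ hWi.aemeasurable c (1 / lam) (fun ω => (hW0 ω).le) hWle
  have hφ2W : Integrable (fun ω => (φ (2 * W ω)).toReal) P := by
    refine phi_integrable hφ hΔ hZφ (hWi.const_mul 2).aemeasurable (2 * c) (2 * (1 / lam))
      (fun ω => by linarith [hW0 ω]) fun ω => ?_
    rw [mul_assoc, ← mul_max_of_nonneg _ _ (by norm_num : (0:ℝ) ≤ 2)]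
    exact mul_le_mul_of_nonneg_left (hWle ω) (by norm_num)
  have hβlt := hb hφW
  have hgW : AEMeasurable (fun ω => g (W ω)) P := by
    have hm : Monotone (fun x => g (max c x)) := fun x y hxy =>
      hgmono _ _ (hc0.trans_le (le_max_left _ _)) (max_le_max_left _ hxy)
    have := hm.measurable.comp_aemeasurable hWi.aemeasurable
    refine this.congr (Filter.Eventually.of_forall fun ω => ?_)
    simp only [Function.comp]
    rw [max_eq_right (hWc ω)]
  have hWg : Integrable (fun ω => W ω * g (W ω)) P := by
    refine integrable_sandwich (a := fun ω => (φ (W ω)).toReal - (φ 0).toReal)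
      (b := fun ω => (φ (2 * W ω)).toReal - (φ (W ω)).toReal)
      (hWi.aemeasurable.mul hgW).aestronglyMeasurable (hφW.sub (integrable_const _))
      (hφ2W.sub hφW) (fun ω => ?_) (fun ω => ?_)
    · have := hg (W ω) (hW0 ω) 0 le_rfl
      linarith
    · have := hg (W ω) (hW0 ω) (2 * W ω) (by linarith [hW0 ω])
      linarith
  have hpsi : ∀ x, 0 < x → psiR φ (g x) = x * g x - (φ x).toReal := by
    intro x hx
    refine le_antisymm (psi_le hφ fun z hz => ?_) ?_
    · have := hg x hx z hz
      linarith
    · have := psi_ge hφ (g x) hx.le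
      linarith
  set U : Ω → ℝ := fun ω => g (W ω) - g c with hUdef
  have hU0 : ∀ ω, 0 ≤ U ω := fun ω => by
    have := hgmono c (W ω) hc0 (hWc ω)
    simp only [hUdef]; linarith
  have hUW : ∀ ω, U ω * |Z ω| = lam * (U ω * W ω) := by
    intro ω
    by_cases h : |Z ω| / lam ≤ c
    · have : W ω = c := max_eq_left h
      simp [hUdef, this]
    · have : W ω = |Z ω| / lam := max_eq_right (not_le.1 h).le
      rw [this]; field_simp
  have hUWi : Integrable (fun ω => U ω * W ω) P := by
    refine (hWg.sub (hWi.const_mul (g c))).congr (Filter.Eventually.of_forall fun ω => ?_)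
    simp only [hUdef, Pi.sub_apply]; ring
  have hUWe : ∫ ω, U ω * W ω ∂P = (∫ ω, W ω * g (W ω) ∂P) - g c := by
    have : (fun ω => U ω * W ω) = fun ω => W ω * g (W ω) - g c * W ω := by
      funext ω; simp only [hUdef]; ring
    rw [this, integral_sub hWg (hWi.const_mul _), integral_const_mul, h1, mul_one]
  set D := ∫ ω, U ω * W ω ∂P with hD
  have hD0 : 0 < D := by
    have hnn : 0 ≤ D := integral_nonneg fun ω => mul_nonneg (hU0 ω) (hW0 ω).le
    rcases hnn.eq_or_lt with h | h
    · exfalso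
      have hz := (integral_eq_zero_iff_of_nonneg (fun ω => mul_nonneg (hU0 ω) (hW0 ω).le) hUWi).1
        h.symm
      have hle : ∫ ω, (φ (W ω)).toReal ∂P ≤ ∫ ω, ((φ c).toReal - g c * c + g c * W ω) ∂P := by
        refine integral_mono_ae hφW ((integrable_const _).add (hWi.const_mul _)) ?_
        filter_upwards [hz] with ω hω
        have hω' : U ω * W ω = 0 := hω
        have hu : U ω = 0 := by
          rcases mul_eq_zero.1 hω' with h | h
          · exact h
          · exact absurd h (hW0 ω).ne'
        have hgc : g (W ω) = g c := by simp only [hUdef] at hu; linarith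
        have := hg (W ω) (hW0 ω) c hc
        rw [hgc] at this
        linarith
      rw [integral_add (integrable_const _) (hWi.const_mul _), integral_const_mul, h1] at hle
      simp only [integral_const, probReal_univ, smul_eq_mul, one_mul] at hle
      have := hg c hc0 1 zero_le_one
      rw [phi_one hφ] at this
      linarith
    · exact h
  have hψi : Integrable (fun ω => psiR φ (g (W ω))) P := by
    refine (hWg.sub hφW).congr (Filter.Eventually.of_forall fun ω => ?_)
    simp only [Pi.sub_apply]; rw [hpsi _ (hW0 ω)]
  have hψe : ∫ ω, psiR φ (g (W ω)) ∂P = (∫ ω, W ω * g (W ω) ∂P) - ∫ ω, (φ (W ω)).toReal ∂P := by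
    rw [← integral_sub hWg hφW]
    exact integral_congr_ae (Filter.Eventually.of_forall fun ω => hpsi _ (hW0 ω))
  have habs : ∀ ω, |s ω * (1 / D * U ω)| = 1 / D * U ω := fun ω => by
    rw [abs_mul, hs, one_mul, abs_of_nonneg]
    have := hU0 ω
    positivity
  have hXZ : ∀ ω, s ω * (1 / D * U ω) * Z ω = 1 / D * (lam * (U ω * W ω)) := fun ω => by
    rw [← hUW, ← hsZ ω]; ring
  refine le_sSup ⟨fun ω => s ω * (1 / D * U ω), ⟨D / 2, by positivity, ?_⟩, ?_, ?_, ?_⟩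
  · simp only [habs]
    have e : ∀ ω, D / 2 * (1 / D * U ω) = 1 / 2 * (g (W ω) + -g c) := fun ω => by
      simp only [hUdef]; field_simp; ring
    simp only [e]
    refine integrable_sandwich (a := fun _ => 0)
      (b := fun ω => 1 / 2 * (psiR φ (g (W ω)) + psiR φ (-g c)))
      ((psi_mono hφ).measurable.comp_aemeasurable
        ((hgW.add_const _).const_mul _)).aestronglyMeasurable
      (integrable_const _) ((hψi.add (integrable_const _)).const_mul _) (fun ω => ?_)
      (fun ω => psi_mid hφ _ _)
    refine le_trans ?_ (psi_ge_self hφ _)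
    have := hU0 ω
    simp only [hUdef] at this
    linarith
  · simp only [habs]
    have e : ∀ ω, 1 / D * U ω / (1 / D) - (-g c) = g (W ω) := fun ω => by
      simp only [hUdef]; field_simp; ring
    have := rhoDiv_le (P := P) (φ := φ) (β := β) (X := fun ω => 1 / D * U ω) (-g c) (1 / D)
      (by positivity) (by simp only [e]; exact hψi)
    refine this.trans ?_
    simp only [e]
    have : 1 / D * (β + -g c + ∫ ω, psiR φ (g (W ω)) ∂P) ≤ 1 := by
      rw [one_div, inv_mul_le_iff₀ hD0, hψe]
      have : ∫ ω, (φ (W ω)).toReal ∂P = ∫ ω, (φ (max c (|Z ω| / lam))).toReal ∂P := rfl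
      linarith
    exact_mod_cast this
  · simp only [hXZ]
    exact (hUWi.const_mul _).const_mul _
  · simp only [hXZ]
    rw [integral_const_mul, integral_const_mul, ← hD]
    congr 1
    field_simp

variable {Ω : Type*} [MeasurableSpace Ω]

/-- Dual norm formula: for `φ ∈ Δ₂` and `Z ∈ L^φ`,
`‖Z‖*_{φ,β} = inf { λ ≥ E|Z| : E[φ(max{c_Z(λ), |Z|/λ})] ≤ β }`, where `c_Z` is the
continuous function with `E[max{c_Z(λ), |Z|/λ}] = 1`; equivalently the infimum over
`λ ≥ E|Z|` admitting `c ∈ [0,1]` with `E[max{c, |Z|/λ}] = 1` and `E[φ(max{c, |Z|/λ})] ≤ β`. -/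
theorem dual_norm_formula (P : Measure Ω) [IsProbabilityMeasure P]
    (φ : ℝ → EReal) (hφ : IsDivergenceFunction φ) (hΔ : DeltaTwo φ) (β : ℝ) (hβ : 0 < β)
    (Z : Ω → ℝ) (hZ : Integrable Z P)
    (hZφ : ∃ t : ℝ, 0 < t ∧ Integrable (fun ω => (φ (t * |Z ω|)).toReal) P)
    (c : ℝ → ℝ)
    (hc_cont : ContinuousOn c (Set.Ici (∫ ω, |Z ω| ∂P)))
    (hc_mem : ∀ lam : ℝ, (∫ ω, |Z ω| ∂P) ≤ lam → c lam ∈ Set.Icc (0 : ℝ) 1)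
    (hc_eq : ∀ lam : ℝ, (∫ ω, |Z ω| ∂P) ≤ lam →
      (∫ ω, max (c lam) (|Z ω| / lam) ∂P) = 1) :
    sSup (dualNormSet φ β P Z) =
      ((sInf {lam : ℝ | (∫ ω, |Z ω| ∂P) ≤ lam ∧
        Integrable (fun ω => (φ (max (c lam) (|Z ω| / lam))).toReal) P ∧
        (∫ ω, (φ (max (c lam) (|Z ω| / lam))).toReal ∂P) ≤ β} : ℝ) : EReal) ∧
    sSup (dualNormSet φ β P Z) =
      ((sInf {lam : ℝ | (∫ ω, |Z ω| ∂P) ≤ lam ∧ ∃ cc : ℝ, cc ∈ Set.Icc (0 : ℝ) 1 ∧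
        (∫ ω, max cc (|Z ω| / lam) ∂P) = 1 ∧
        Integrable (fun ω => (φ (max cc (|Z ω| / lam))).toReal) P ∧
        (∫ ω, (φ (max cc (|Z ω| / lam))).toReal ∂P) ≤ β} : ℝ) : EReal) := by
  have hS : {lam : ℝ | (∫ ω, |Z ω| ∂P) ≤ lam ∧ ∃ cc : ℝ, cc ∈ Set.Icc (0 : ℝ) 1 ∧
        (∫ ω, max cc (|Z ω| / lam) ∂P) = 1 ∧
        Integrable (fun ω => (φ (max cc (|Z ω| / lam))).toReal) P ∧
        (∫ ω, (φ (max cc (|Z ω| / lam))).toReal ∂P) ≤ β} =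
      {lam : ℝ | (∫ ω, |Z ω| ∂P) ≤ lam ∧
        Integrable (fun ω => (φ (max (c lam) (|Z ω| / lam))).toReal) P ∧
        (∫ ω, (φ (max (c lam) (|Z ω| / lam))).toReal ∂P) ≤ β} := by
    ext lam
    constructor
    · rintro ⟨hl, cc, hcc, h1, h2, h3⟩
      have hae := max_ae_eq_one (hZ.abs.div_const lam) (h1.trans (hc_eq lam hl).symm)
      have hae' : (fun ω => (φ (max cc (|Z ω| / lam))).toReal) =ᵐ[P]
          fun ω => (φ (max (c lam) (|Z ω| / lam))).toReal := by
        filter_upwards [hae] with ω hω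
        have hω' : max cc (|Z ω| / lam) = max (c lam) (|Z ω| / lam) := hω
        rw [hω']
      exact ⟨hl, h2.congr hae', (integral_congr_ae hae').symm.trans_le h3⟩
    · rintro ⟨hl, h2, h3⟩
      exact ⟨hl, c lam, hc_mem lam hl, hc_eq lam hl, h2, h3⟩
  rw [hS]
  refine and_self_iff.2 ?_
  set S := {lam : ℝ | (∫ ω, |Z ω| ∂P) ≤ lam ∧
        Integrable (fun ω => (φ (max (c lam) (|Z ω| / lam))).toReal) P ∧
        (∫ ω, (φ (max (c lam) (|Z ω| / lam))).toReal ∂P) ≤ β} with hSdef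
  have hne : S.Nonempty := by
    obtain ⟨lam, hl, h⟩ := exists_lam hφ hΔ hβ hZ hZφ
    exact ⟨lam, hl, h (c lam) (hc_mem lam hl) (hc_eq lam hl)⟩
  have hbdd : BddBelow S := ⟨∫ ω, |Z ω| ∂P, fun lam hl => hl.1⟩
  refine le_antisymm (sSup_le ?_) ?_
  · rintro v ⟨X, -, hX, hXZ, rfl⟩
    have : (∫ ω, X ω * Z ω ∂P) ≤ sInf S := by
      refine le_csInf hne ?_
      rintro lam ⟨hl, h2, h3⟩
      exact upper_one hφ hZ hl (hc_mem lam hl).1 (hc_eq lam hl) h2 h3 hX hXZ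
    exact_mod_cast this
  · by_contra hlt
    push Not at hlt
    obtain ⟨lam, hl1, hl2⟩ := EReal.lt_iff_exists_real_btwn.1 hlt
    have hl2' : lam < sInf S := by exact_mod_cast hl2
    have hl : (∫ ω, |Z ω| ∂P) < lam := by
      exact_mod_cast (lower_one hφ hβ hZ).trans_lt hl1
    refine absurd hl1 (not_lt.2 (lower_two hφ hΔ hβ hZ hZφ hl (hc_mem lam hl.le).1
      (hc_eq lam hl.le) fun hi => ?_))
    by_contra hle
    push Not at hle
    exact absurd (csInf_le hbdd (show lam ∈ S from ⟨hl.le, hi, hle⟩)) (not_le.2 hl2')
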